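/- arXiv:2409.08553 — 7 statements merged into one kernel-verified Lean document; each statement's English description precedes it below -/
import Mathlib

section
/- There exists an ℝ-algebra isomorphism between the Clifford algebra Cl(4,3) and the product algebra Mat₈(ℝ) × Mat₈(ℝ) of two copies of the 8×8 real matrix algebra. -/
/- Signature (4,3) quadratic form on ℝ⁷:
   Q x = x₀² + x₁² + x₂² + x₃² − x₄² − x₅² − x₆². -/
noncomputable def sig43 : QuadraticForm ℝ (Fin 7 → ℝ) :=
  QuadraticMap.weightedSumSquares ℝ ![(1 : ℝ), 1, 1, 1, -1, -1, -1]

/- Standard basis of ℝ⁷. -/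
noncomputable def stdBasis (i : Fin 7) : Fin 7 → ℝ := Pi.single i 1

/- The volume element ν = ι(e₀) ⋯ ι(e₆) of Cl(4,3). -/
noncomputable def vol : CliffordAlgebra sig43 :=
  CliffordAlgebra.ι sig43 (stdBasis 0) * CliffordAlgebra.ι sig43 (stdBasis 1) *
  CliffordAlgebra.ι sig43 (stdBasis 2) * CliffordAlgebra.ι sig43 (stdBasis 3) *
  CliffordAlgebra.ι sig43 (stdBasis 4) * CliffordAlgebra.ι sig43 (stdBasis 5) *
  CliffordAlgebra.ι sig43 (stdBasis 6)

namespace Cl43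

open CliffordAlgebra

/-! ### Integer gamma matrices (Jordan-Wigner) -/

/-- sign `(-1)^(number of set bits of c below position k)` -/
def sgn (k c : ℕ) : ℤ :=
  (if 0 < k ∧ c.testBit 0 = true then -1 else 1) *
  (if 1 < k ∧ c.testBit 1 = true then -1 else 1) *
  (if 2 < k ∧ c.testBit 2 = true then -1 else 1)

/-- The integer gamma matrices. -/
def G (i : Fin 7) : Matrix (Fin 8) (Fin 8) ℤ := Matrix.of fun r c =>
  if i.val < 3 then
    if r.val = c.val ^^^ (2 ^ i.val) then sgn i.val c.val else 0
  else if i.val = 3 then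
    if r = c then sgn 3 c.val else 0
  else
    if r.val = c.val ^^^ (2 ^ (i.val - 4)) then
      sgn (i.val - 4) c.val * (if c.val.testBit (i.val - 4) = true then -1 else 1)
    else 0

def w (i : Fin 7) : ℤ := if i.val < 4 then 1 else -1

theorem G_anti : ∀ i j : Fin 7,
    G i * G j + G j * G i = if i = j then (2 * w i) • (1 : Matrix (Fin 8) (Fin 8) ℤ) else 0 := by
  decide +kernel

def eps (i : Fin 7) : ℤ := if i.val = 3 then -1 else 1

theorem eps_sq (i : Fin 7) : eps i * eps i = 1 := by
  revert i; decide

abbrev MZ := Matrix (Fin 8) (Fin 8) ℤ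
abbrev MR := Matrix (Fin 8) (Fin 8) ℝ

def H (i : Fin 7) : MZ × MZ := (G i, eps i • G i)

theorem H_anti (i j : Fin 7) :
    H i * H j + H j * H i = if i = j then ((2 * w i : ℤ) : MZ × MZ) else 0 := by
  have h := G_anti i j
  by_cases hij : i = j
  · subst hij
    simp only [if_true] at h ⊢
    refine Prod.ext ?_ ?_
    · simpa [H, zsmul_eq_mul] using h
    · simp only [H, Prod.snd_add, Prod.snd_mul, smul_mul_smul_comm, eps_sq, one_smul]
      simpa [zsmul_eq_mul] using h
  · simp only [hij, if_false] at h ⊢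
    refine Prod.ext ?_ ?_
    · simpa [H] using h
    · simp only [H, Prod.snd_add, Prod.snd_mul, smul_mul_smul_comm]
      rw [mul_comm (eps j), ← smul_add, h]; simp

noncomputable def F : MZ × MZ →+* MR × MR :=
  RingHom.prodMap (Int.castRingHom ℝ).mapMatrix (Int.castRingHom ℝ).mapMatrix

noncomputable def gam : (Fin 7 → ℝ) →ₗ[ℝ] MR × MR :=
  Fintype.linearCombination ℝ (fun i => F (H i))

theorem FH_anti (i j : Fin 7) :
    F (H i) * F (H j) + F (H j) * F (H i) = if i = j then ((2 * w i : ℤ) : MR × MR) else 0 := by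
  rw [← map_mul, ← map_mul, ← map_add, H_anti]
  split_ifs
  · exact map_intCast F _
  · exact map_zero F

theorem w_eq (i : Fin 7) : (![(1 : ℝ), 1, 1, 1, -1, -1, -1] i) = (w i : ℝ) := by
  fin_cases i <;> simp [w]

theorem gam_sq (x : Fin 7 → ℝ) : gam x * gam x = algebraMap ℝ (MR × MR) (sig43 x) := by
  have h1 : gam x * gam x = ∑ i, ∑ j, (x i * x j) • (F (H i) * F (H j)) := by
    simp only [gam, Fintype.linearCombination_apply, Finset.sum_mul_sum, smul_mul_smul_comm]
  have h2 : gam x * gam x = ∑ i, ∑ j, (x i * x j) • (F (H j) * F (H i)) := by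
    rw [h1, Finset.sum_comm]
    simp only [mul_comm]
  have h3 : gam x * gam x + gam x * gam x = (2 : ℝ) • algebraMap ℝ (MR × MR) (sig43 x) := by
    conv_lhs => rw [h2]
    conv_lhs => enter [1]; rw [← h2, h1]
    rw [← Finset.sum_add_distrib]
    simp only [← Finset.sum_add_distrib, ← smul_add, FH_anti, smul_ite, smul_zero,
      Finset.sum_ite_eq, Finset.mem_univ, if_true]
    simp only [sig43, QuadraticMap.weightedSumSquares_apply, w_eq, map_sum, Finset.smul_sum]
    refine Finset.sum_congr rfl fun i _ => ?_
    rw [← map_intCast (algebraMap ℝ (MR × MR)), Algebra.smul_def, Algebra.smul_def, ← map_mul,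
      ← map_mul]
    congr 1
    push_cast
    simp only [smul_eq_mul]
    ring
  rw [← two_smul ℝ] at h3
  exact smul_right_injective _ (two_ne_zero' ℝ) h3

noncomputable def phi : CliffordAlgebra sig43 →ₐ[ℝ] MR × MR :=
  CliffordAlgebra.lift sig43 ⟨gam, gam_sq⟩

/-! ### Surjectivity -/

noncomputable def T : Subring (MZ × MZ) := phi.range.toSubring.comap F

theorem H_mem (i : Fin 7) : H i ∈ T := by
  refine ⟨ι sig43 (Pi.single i 1), ?_⟩
  change phi (ι sig43 (Pi.single i 1)) = F (H i)
  rw [phi, CliffordAlgebra.lift_ι_apply]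
  simp [gam]

/-- `X n` maps the vacuum to the `n`-th basis vector. -/
def X (n : Fin 8) : MZ × MZ :=
  (if n.val.testBit 0 = true then H 0 else 1) * (if n.val.testBit 1 = true then H 1 else 1) *
    (if n.val.testBit 2 = true then H 2 else 1)

def Y (n : Fin 8) : MZ × MZ :=
  (if n.val.testBit 2 = true then H 2 else 1) * (if n.val.testBit 1 = true then H 1 else 1) *
    (if n.val.testBit 0 = true then H 0 else 1)

theorem ite_mem (b : Bool) (i : Fin 7) : (if b = true then H i else 1) ∈ T := by
  split_ifs
  · exact H_mem i
  · exact one_mem _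

theorem X_mem (n : Fin 8) : X n ∈ T :=
  mul_mem (mul_mem (ite_mem _ _) (ite_mem _ _)) (ite_mem _ _)

theorem Y_mem (n : Fin 8) : Y n ∈ T :=
  mul_mem (mul_mem (ite_mem _ _) (ite_mem _ _)) (ite_mem _ _)

def vac : MZ × MZ := (1 + H 0 * H 4) * (1 + H 1 * H 5) * (1 + H 2 * H 6)

theorem vac_mem : vac ∈ T :=
  mul_mem (mul_mem (add_mem (one_mem _) (mul_mem (H_mem _) (H_mem _)))
    (add_mem (one_mem _) (mul_mem (H_mem _) (H_mem _))))
    (add_mem (one_mem _) (mul_mem (H_mem _) (H_mem _)))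

def omega : MZ × MZ := H 0 * H 4 * (H 1 * H 5) * (H 2 * H 6) * H 3

theorem omega_mem : omega ∈ T :=
  mul_mem (mul_mem (mul_mem (mul_mem (H_mem _) (H_mem _)) (mul_mem (H_mem _) (H_mem _)))
    (mul_mem (H_mem _) (H_mem _))) (H_mem _)

theorem omega_eq : omega = (1, -1) := by decide +kernel

/-- integer matrix unit -/
def E (i j : Fin 8) : MZ := Matrix.of fun r c => if i = r ∧ j = c then 1 else 0

theorem vac_eq : vac = (8 • E 0 0, 8 • E 0 0) := by decide +kernel

theorem XEY : ∀ i j : Fin 8, X i * (E 0 0, E 0 0) * Y j = (E i j, E i j) := by decide +kernel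

theorem unit_mem (i j : Fin 8) : ((8 : ℕ) • (E i j, E i j) : MZ × MZ) ∈ T := by
  have h := mul_mem (mul_mem (X_mem i) vac_mem) (Y_mem j)
  have e : vac = (8 : ℕ) • ((E 0 0, E 0 0) : MZ × MZ) := vac_eq
  rwa [e, mul_smul_comm, smul_mul_assoc, XEY] at h

theorem unit_mem_left (i j : Fin 8) : ((16 : ℕ) • (E i j, 0) : MZ × MZ) ∈ T := by
  have h := mul_mem (add_mem (one_mem T) omega_mem) (unit_mem i j)
  have e : (1 + omega) * ((8 : ℕ) • ((E i j, E i j) : MZ × MZ)) = (16 : ℕ) • (E i j, 0) := by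
    rw [omega_eq]
    refine Prod.ext ?_ ?_
    · simp only [Prod.fst_mul, Prod.fst_add, Prod.fst_one, Prod.smul_fst, add_mul, one_mul]
      rw [← add_smul]
    · simp
  rwa [e] at h

theorem unit_mem_right (i j : Fin 8) : ((16 : ℕ) • (0, E i j) : MZ × MZ) ∈ T := by
  have h := mul_mem (sub_mem (one_mem T) omega_mem) (unit_mem i j)
  have e : (1 - omega) * ((8 : ℕ) • ((E i j, E i j) : MZ × MZ)) = (16 : ℕ) • (0, E i j) := by
    rw [omega_eq]
    refine Prod.ext ?_ ?_
    · simp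
    · simp only [Prod.snd_mul, Prod.snd_sub, Prod.snd_one, Prod.smul_snd, sub_neg_eq_add,
        add_mul, one_mul]
      rw [← add_smul]
  rwa [e] at h

theorem of_T {z : MZ × MZ} (h : ((16 : ℕ) • z) ∈ T) : F z ∈ phi.range := by
  have h' : F ((16 : ℕ) • z) ∈ phi.range := h
  rw [map_nsmul] at h'
  have h2 := phi.range.smul_mem h' (1 / 16 : ℝ)
  rw [← Nat.cast_smul_eq_nsmul ℝ, smul_smul] at h2
  norm_num at h2
  exact h2

theorem E_map (i j : Fin 8) :
    (Int.castRingHom ℝ).mapMatrix (E i j) = Matrix.single i j (1 : ℝ) := by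
  ext r c
  simp only [RingHom.mapMatrix_apply, Matrix.map_apply, E, Matrix.of_apply, Matrix.single_apply]
  split_ifs <;> simp

theorem left_mem (M : MR) : (M, (0 : MR)) ∈ phi.range := by
  have h : (M, (0 : MR)) = LinearMap.inl ℝ MR MR M := rfl
  rw [h, Matrix.matrix_eq_sum_single M, map_sum]
  refine sum_mem fun i _ => ?_
  rw [map_sum]
  refine sum_mem fun j _ => ?_
  have e : Matrix.single i j (M i j) = M i j • Matrix.single i j (1 : ℝ) := by simp
  rw [e, map_smul]
  refine phi.range.smul_mem ?_ _
  have := of_T (unit_mem_left i j)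
  simp only [F, RingHom.coe_prodMap, Prod.map_apply, E_map, map_zero] at this
  exact this

theorem right_mem (M : MR) : ((0 : MR), M) ∈ phi.range := by
  have h : ((0 : MR), M) = LinearMap.inr ℝ MR MR M := rfl
  rw [h, Matrix.matrix_eq_sum_single M, map_sum]
  refine sum_mem fun i _ => ?_
  rw [map_sum]
  refine sum_mem fun j _ => ?_
  have e : Matrix.single i j (M i j) = M i j • Matrix.single i j (1 : ℝ) := by simp
  rw [e, map_smul]
  refine phi.range.smul_mem ?_ _
  have := of_T (unit_mem_right i j)
  simp only [F, RingHom.coe_prodMap, Prod.map_apply, E_map, map_zero] at this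
  exact this

theorem phi_surj : Function.Surjective phi := by
  rintro ⟨A, B⟩
  have h := add_mem (left_mem A) (right_mem B)
  simpa using h

/-! ### Dimension bound -/

abbrev C := CliffordAlgebra sig43

noncomputable def e (i : ℕ) : C :=
  if h : i < 7 then ι sig43 (Pi.single (⟨i, h⟩ : Fin 7) 1) else 0

theorem e_sq (i : ℕ) : ∃ c : ℝ, e i * e i = algebraMap ℝ C c := by
  unfold e
  split_ifs with h
  · exact ⟨_, ι_sq_scalar _ _⟩
  · exact ⟨0, by simp⟩

theorem e_anti (i j : ℕ) (hij : i ≠ j) : e i * e j = -(e j * e i) := by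
  unfold e
  split_ifs with h h'
  · rw [eq_neg_iff_add_eq_zero, ι_mul_ι_add_swap]
    have : QuadraticMap.polar sig43 (Pi.single (⟨i, h⟩ : Fin 7) 1) (Pi.single (⟨j, h'⟩ : Fin 7) 1)
        = 0 := by
      simp only [QuadraticMap.polar, sig43, QuadraticMap.weightedSumSquares_apply,
        ← Finset.sum_sub_distrib]
      refine Finset.sum_eq_zero fun k _ => ?_
      by_cases hk : k = ⟨i, h⟩
      · subst hk
        have : (⟨i, h⟩ : Fin 7) ≠ ⟨j, h'⟩ := by simpa using hij
        simp [Pi.single_apply, this]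
      · simp [Pi.single_apply, hk]
    rw [this, map_zero]
  all_goals simp

noncomputable def V : ℕ → Submodule ℝ C
  | 0 => Submodule.span ℝ {1}
  | k + 1 => V k ⊔ (V k).map (LinearMap.mulRight ℝ (e k))

theorem mem_V_succ {k : ℕ} {x : C} :
    x ∈ V (k + 1) ↔ ∃ a ∈ V k, ∃ b ∈ V k, a + b * e k = x := by
  simp [V, Submodule.mem_sup]

theorem V_comm (k : ℕ) : ∀ i, k ≤ i → ∀ v ∈ V k, ∃ u ∈ V k, e i * v = u * e i := by
  induction k with
  | zero =>
    intro i _ v hv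
    obtain ⟨c, rfl⟩ := Submodule.mem_span_singleton.1 hv
    exact ⟨_, hv, by simp⟩
  | succ k ih =>
    intro i hi v hv
    obtain ⟨a, ha, b, hb, rfl⟩ := mem_V_succ.1 hv
    obtain ⟨a', ha', ea⟩ := ih i (by omega) a ha
    obtain ⟨b', hb', eb⟩ := ih i (by omega) b hb
    refine ⟨a' + (-b') * e k, mem_V_succ.2 ⟨a', ha', -b', neg_mem hb', rfl⟩, ?_⟩
    rw [mul_add, ← mul_assoc, ea, eb, mul_assoc b', e_anti i k (by omega)]
    noncomm_ring

theorem V_left (k : ℕ) : ∀ i, i < k → ∀ v ∈ V k, e i * v ∈ V k := by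
  induction k with
  | zero => intro i hi; omega
  | succ k ih =>
    intro i hi v hv
    obtain ⟨a, ha, b, hb, rfl⟩ := mem_V_succ.1 hv
    rcases Nat.lt_succ_iff_lt_or_eq.1 hi with hik | rfl
    · exact mem_V_succ.2 ⟨_, ih i hik a ha, _, ih i hik b hb, by rw [mul_add, mul_assoc]⟩
    · obtain ⟨a', ha', ea⟩ := V_comm i i le_rfl a ha
      obtain ⟨b', hb', eb⟩ := V_comm i i le_rfl b hb
      obtain ⟨c, hc⟩ := e_sq i
      refine mem_V_succ.2 ⟨c • b', Submodule.smul_mem _ _ hb', a', ha', ?_⟩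
      rw [mul_add, ← mul_assoc, ea, eb, mul_assoc b', hc, ← Algebra.commutes, ← Algebra.smul_def,
        add_comm]

theorem V_one (k : ℕ) : (1 : C) ∈ V k := by
  induction k with
  | zero => exact Submodule.mem_span_singleton_self _
  | succ k ih => exact Submodule.mem_sup_left ih

theorem V_top : V 7 = ⊤ := by
  rw [eq_top_iff]
  rintro x -
  induction x using CliffordAlgebra.left_induction with
  | algebraMap r => 
    rw [Algebra.algebraMap_eq_smul_one]
    exact Submodule.smul_mem _ _ (V_one 7)
  | add x y hx hy => exact add_mem hx hy
  | ι_mul x m hx =>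
    rw [pi_eq_sum_univ' m, map_sum, Finset.sum_mul]
    refine sum_mem fun i _ => ?_
    rw [map_smul, smul_mul_assoc]
    refine Submodule.smul_mem _ _ ?_
    have := V_left 7 i i.2 x hx
    simp only [e, i.2, dif_pos] at this
    convert this using 3

theorem V_fin (k : ℕ) : FiniteDimensional ℝ (V k) ∧ Module.finrank ℝ (V k) ≤ 2 ^ k := by
  induction k with
  | zero =>
    refine ⟨?_, ?_⟩
    · change FiniteDimensional ℝ (Submodule.span ℝ {(1 : C)}); infer_instance
    · change Module.finrank ℝ (Submodule.span ℝ {(1 : C)}) ≤ 1; exact (finrank_span_le_card _).trans (by simp)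
  | succ k ih =>
    obtain ⟨h1, h2⟩ := ih
    refine ⟨?_, ?_⟩
    · change FiniteDimensional ℝ ↥(V k ⊔ (V k).map (LinearMap.mulRight ℝ (e k))); infer_instance
    · change Module.finrank ℝ ↥(V k ⊔ (V k).map (LinearMap.mulRight ℝ (e k))) ≤ _
      have := Submodule.finrank_add_le_finrank_add_finrank (V k)
        ((V k).map (LinearMap.mulRight ℝ (e k)))
      have h3 := Submodule.finrank_map_le (LinearMap.mulRight ℝ (e k)) (V k)
      rw [pow_succ]
      omega

end Cl43

/-- Cl(4,3) ≅ Mat₈(ℝ) × Mat₈(ℝ) as ℝ-algebras. -/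
theorem cl43_iso_matrix_prod :
    Nonempty (CliffordAlgebra sig43 ≃ₐ[ℝ]
      (Matrix (Fin 8) (Fin 8) ℝ × Matrix (Fin 8) (Fin 8) ℝ)) := by
  obtain ⟨h1, h2⟩ := Cl43.V_fin 7
  rw [Cl43.V_top] at h1 h2
  have hfin : FiniteDimensional ℝ (CliffordAlgebra sig43) :=
    Module.Finite.equiv (Submodule.topEquiv (R := ℝ) (M := CliffordAlgebra sig43))
  rw [finrank_top] at h2
  change Module.finrank ℝ (CliffordAlgebra sig43) ≤ 2 ^ 7 at h2
  have hs : Function.Surjective Cl43.phi.toLinearMap := Cl43.phi_surj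
  have hd : Module.finrank ℝ (Cl43.MR × Cl43.MR) = 128 := by
    simp [Module.finrank_prod, Module.finrank_matrix]
  have h3 := LinearMap.finrank_le_finrank_of_surjective hs
  have h4 : Module.finrank ℝ (CliffordAlgebra sig43) = Module.finrank ℝ (Cl43.MR × Cl43.MR) := by
    omega
  have hi := (LinearMap.injective_iff_surjective_of_finrank_eq_finrank h4).2 hs
  exact ⟨AlgEquiv.ofBijective Cl43.phi ⟨hi, Cl43.phi_surj⟩⟩
end

section
/- For each sign l ∈ {1, −1} there exists a surjective ℝ-algebra homomorphism γ_l : Cl(4,3) → Mat₈(ℝ) such that γ_l(ν) = l • 1, i.e. Cl(4,3) admits exactly two inequivalent irreducible real Clifford modules of dimension 8, distinguished by the value they take on the volume element ν. -/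
/-- Signed permutation matrix: row `i` has the entry `s i` in column `f i`. -/
def sp (f : Fin 8 → Fin 8) (s : Fin 8 → ℤ) : Matrix (Fin 8) (Fin 8) ℝ :=
  Matrix.of fun i j => if j = f i then (s i : ℝ) else 0

theorem sp_mul (f g : Fin 8 → Fin 8) (s t : Fin 8 → ℤ) :
    sp f s * sp g t = sp (fun i => g (f i)) (fun i => s i * t (f i)) := by
  ext i j
  simp only [sp, Matrix.mul_apply, Matrix.of_apply]
  rw [Finset.sum_eq_single (f i)]
  · simp
  · intro k _ hk
    simp [hk]
  · simp

theorem sp_add (f : Fin 8 → Fin 8) (s t : Fin 8 → ℤ) :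
    sp f s + sp f t = sp f (fun i => s i + t i) := by
  ext i j
  by_cases h : j = f i <;> simp [sp, h]

theorem sp_id (s : Fin 8 → ℤ) : sp (fun i => i) s = Matrix.diagonal (fun i => (s i : ℝ)) := by
  ext i j
  simp [sp, Matrix.diagonal_apply, eq_comm]

theorem single_mul_sp (i j : Fin 8) (c : ℝ) (f : Fin 8 → Fin 8) (s : Fin 8 → ℤ) :
    Matrix.single i j c * sp f s = Matrix.single i (f j) (c * s j) := by
  ext a b
  simp only [Matrix.mul_apply, Matrix.single_apply, sp, Matrix.of_apply]
  rw [Finset.sum_eq_single j]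
  · by_cases h1 : i = a <;> by_cases h2 : b = f j <;> simp [h1, h2, eq_comm]
  · intro k _ hk
    simp [hk.symm]
  · simp

/-- Bit masks of the generators. -/
def gm : Fin 7 → Fin 8 := ![1, 2, 4, 0, 1, 2, 4]

/-- Permutations underlying the generators. -/
def gf (k : Fin 7) (x : Fin 8) : Fin 8 := x ^^^ gm k

/-- Signs of the generators. -/
def gs (e : ℤ) : Fin 7 → Fin 8 → ℤ :=
  ![![1, 1, 1, 1, 1, 1, 1, 1],
    ![1, -1, 1, -1, 1, -1, 1, -1],
    ![1, -1, -1, 1, 1, -1, -1, 1],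
    ![e, -e, -e, e, -e, e, e, -e],
    ![1, -1, 1, -1, 1, -1, 1, -1],
    ![1, -1, -1, 1, 1, -1, -1, 1],
    ![1, -1, -1, 1, -1, 1, 1, -1]]

/-- The weights of the quadratic form, as integers. -/
def gw : Fin 7 → ℤ := ![1, 1, 1, 1, -1, -1, -1]

/-- The gamma matrices. -/
def gam (e : ℤ) (k : Fin 7) : Matrix (Fin 8) (Fin 8) ℝ := sp (gf k) (gs e k)

theorem gf_comm : ∀ i j : Fin 7, ∀ x, gf i (gf j x) = gf j (gf i x) := by decide +kernel

theorem gf_self : ∀ i : Fin 7, ∀ x, gf i (gf i x) = x := by decide +kernel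

theorem gs_anti (e : ℤ) (he : e = 1 ∨ e = -1) : ∀ i j : Fin 7, ∀ x,
    gs e i x * gs e j (gf i x) + gs e j x * gs e i (gf j x)
      = if i = j then 2 * gw i else 0 := by
  rcases he with rfl | rfl <;> decide +kernel

theorem gam_anti (e : ℤ) (he : e = 1 ∨ e = -1) (i j : Fin 7) :
    gam e i * gam e j + gam e j * gam e i = (if i = j then 2 * (gw i : ℝ) else 0) • 1 := by
  unfold gam
  rw [sp_mul, sp_mul, show (fun x => gf i (gf j x)) = fun x => gf j (gf i x) from
    funext (gf_comm i j), sp_add]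
  simp only [gs_anti e he]
  by_cases h : i = j
  · subst h
    simp only [gf_self, sp_id]
    ext a b
    by_cases hab : a = b <;> simp [hab]
  · ext a b
    simp [h, sp]

/-- The linear map sending the standard basis to the gamma matrices. -/
noncomputable def glin (e : ℤ) : (Fin 7 → ℝ) →ₗ[ℝ] Matrix (Fin 8) (Fin 8) ℝ :=
  Fintype.linearCombination ℝ (gam e)

theorem glin_sq (e : ℤ) (he : e = 1 ∨ e = -1) (v : Fin 7 → ℝ) :
    glin e v * glin e v = algebraMap ℝ _ (sig43 v) := by
  have h1 : glin e v * glin e v = ∑ i, ∑ j, (v i * v j) • (gam e i * gam e j) := by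
    simp [glin, Fintype.linearCombination_apply, Finset.sum_mul_sum, smul_smul]
    simp only [mul_comm]
  have h2 : glin e v * glin e v = ∑ i, ∑ j, (v i * v j) • (gam e j * gam e i) := by
    rw [h1, Finset.sum_comm]
    simp only [mul_comm (v _) (v _)]
  have h3 : (2 : ℝ) • (glin e v * glin e v) = (2 : ℝ) • algebraMap ℝ _ (sig43 v) := by
    rw [two_smul]
    nth_rewrite 1 [h1]
    rw [h2, ← Finset.sum_add_distrib]
    simp only [← Finset.sum_add_distrib, ← smul_add, gam_anti e he, smul_smul]
    simp only [← Finset.sum_smul, Algebra.algebraMap_eq_smul_one, smul_smul]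
    congr 1
    simp [sig43, QuadraticMap.weightedSumSquares_apply, Fin.sum_univ_succ, gw]
    ring
  exact smul_right_injective _ (two_ne_zero) h3

/-- The representation. -/
noncomputable def grep (e : ℤ) (he : e = 1 ∨ e = -1) :
    CliffordAlgebra sig43 →ₐ[ℝ] Matrix (Fin 8) (Fin 8) ℝ :=
  CliffordAlgebra.lift sig43 ⟨glin e, glin_sq e he⟩

theorem grep_basis (e : ℤ) (he : e = 1 ∨ e = -1) (k : Fin 7) :
    grep e he (CliffordAlgebra.ι sig43 (stdBasis k)) = gam e k := by
  simp [grep, glin, stdBasis]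

/-- The diagonal of the products of the paired generators. -/
def gd (e : ℤ) (k : Fin 3) (x : Fin 8) : ℤ :=
  gs e (![0, 1, 2] k) x * gs e (![4, 5, 6] k) (gf (![0, 1, 2] k) x)

theorem gd_eq (e : ℤ) (k : Fin 3) :
    gam e (![0, 1, 2] k) * gam e (![4, 5, 6] k)
      = Matrix.diagonal (fun x => (gd e k x : ℝ)) := by
  have h : ∀ k : Fin 3, ∀ x, gf (![4, 5, 6] k) (gf (![0, 1, 2] k) x) = x := by decide +kernel
  unfold gam
  rw [sp_mul, show (fun x => gf (![4, 5, 6] k) (gf (![0, 1, 2] k) x)) = fun x => x from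
    funext (h k), sp_id]
  rfl

theorem gd_proj (e : ℤ) (he : e = 1 ∨ e = -1) : ∀ i x : Fin 8,
    (1 + gd e 0 i * gd e 0 x) * (1 + gd e 1 i * gd e 1 x) * (1 + gd e 2 i * gd e 2 x)
      = if x = i then 8 else 0 := by
  rcases he with rfl | rfl <;> decide +kernel

theorem gs_unit (e : ℤ) (he : e = 1 ∨ e = -1) : ∀ k x, gs e k x * gs e k x = 1 := by
  rcases he with rfl | rfl <;> decide +kernel

theorem range_top (e : ℤ) (he : e = 1 ∨ e = -1)
    (S : Subalgebra ℝ (Matrix (Fin 8) (Fin 8) ℝ)) (hS : ∀ k, gam e k ∈ S) : S = ⊤ := by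
  have hd : ∀ k, (fun x => (gd e k x : ℝ)) ∈ S.comap (Matrix.diagonalAlgHom (n := Fin 8) (α := ℝ) ℝ) := by
    intro k
    change Matrix.diagonal (fun x => (gd e k x : ℝ)) ∈ S
    rw [← gd_eq]
    exact S.mul_mem (hS _) (hS _)
  have hdiag : ∀ i : Fin 8, Matrix.single i i (1 : ℝ) ∈ S := by
    intro i
    have hk : ∀ k, (1 + (gd e k i : ℝ) • fun x => (gd e k x : ℝ)) ∈
        S.comap (Matrix.diagonalAlgHom (n := Fin 8) (α := ℝ) ℝ) := fun k =>
      Subalgebra.add_mem _ (Subalgebra.one_mem _) (Subalgebra.smul_mem _ (hd k) _)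
    have hp := Subalgebra.smul_mem _
      (Subalgebra.mul_mem _ (Subalgebra.mul_mem _ (hk 0) (hk 1)) (hk 2)) (1 / 8 : ℝ)
    have hq : (Matrix.diagonal (Pi.single i (1 : ℝ))) ∈ S := by
      change (Pi.single i (1 : ℝ) : Fin 8 → ℝ) ∈
        S.comap (Matrix.diagonalAlgHom (n := Fin 8) (α := ℝ) ℝ)
      convert hp using 1
      funext x
      have := congrArg (Int.cast : ℤ → ℝ) (gd_proj e he i x)
      push_cast at this
      simp only [Pi.smul_apply, Pi.mul_apply, Pi.add_apply, Pi.one_apply, smul_eq_mul, this]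
      by_cases h : x = i <;> simp [h]
    rwa [Matrix.diagonal_single] at hq
  have hstep : ∀ k i j, Matrix.single i j (1 : ℝ) ∈ S → Matrix.single i (gf k j) (1 : ℝ) ∈ S := by
    intro k i j h
    have h1 := S.smul_mem (S.mul_mem h (hS k)) (gs e k j : ℝ)
    rw [gam, single_mul_sp, Matrix.smul_single, one_mul, smul_eq_mul] at h1
    have h2 := congrArg (Int.cast : ℤ → ℝ) (gs_unit e he k j)
    push_cast at h2
    rwa [h2] at h1
  have hreach : ∀ i j : Fin 8, ∃ a b c : Fin 7, gf a (gf b (gf c i)) = j := by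
    have : ∀ i j : Fin 8, ∃ a ∈ ({0, 3} : Finset (Fin 7)), ∃ b ∈ ({1, 3} : Finset (Fin 7)),
      ∃ c ∈ ({2, 3} : Finset (Fin 7)), gf a (gf b (gf c i)) = j := by decide +kernel
    intro i j
    obtain ⟨a, _, b, _, c, _, h⟩ := this i j
    exact ⟨a, b, c, h⟩
  have hall : ∀ i j : Fin 8, Matrix.single i j (1 : ℝ) ∈ S := by
    intro i j
    obtain ⟨a, b, c, rfl⟩ := hreach i j
    exact hstep _ _ _ (hstep _ _ _ (hstep _ _ _ (hdiag i)))
  rw [eq_top_iff]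
  intro M _
  rw [Matrix.matrix_eq_sum_single M]
  refine S.sum_mem fun i _ => S.sum_mem fun j _ => ?_
  have := S.smul_mem (hall i j) (M i j)
  rwa [Matrix.smul_single, smul_eq_mul, mul_one] at this

theorem gam_vol (e : ℤ) (he : e = 1 ∨ e = -1) :
    gam e 0 * gam e 1 * gam e 2 * gam e 3 * gam e 4 * gam e 5 * gam e 6
      = sp (fun i => i) (fun _ => -e) := by
  simp only [gam, sp_mul]
  congr 1
  · funext x
    revert x
    decide +kernel
  · funext x
    revert x
    rcases he with rfl | rfl <;> decide +kernel

/-- for each sign l ∈ {1, −1} there is a surjective ℝ-algebra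
homomorphism γ_l : Cl(4,3) → Mat₈(ℝ) with γ_l(ν) = l • 1, i.e. Cl(4,3) has two
irreducible real 8-dimensional Clifford modules distinguished by the value of ν. -/
theorem exists_irreducible_module_with_vol (l : ℝ) (hl : l = 1 ∨ l = -1) :
    ∃ γ : CliffordAlgebra sig43 →ₐ[ℝ] Matrix (Fin 8) (Fin 8) ℝ,
      Function.Surjective γ ∧ γ vol = l • (1 : Matrix (Fin 8) (Fin 8) ℝ) := by
  obtain ⟨e, he, hle⟩ : ∃ e : ℤ, (e = 1 ∨ e = -1) ∧ l = ((-e : ℤ) : ℝ) := by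
    rcases hl with rfl | rfl
    · exact ⟨-1, by simp, by simp⟩
    · exact ⟨-(-1), by simp, by simp⟩
  refine ⟨grep e he, ?_, ?_⟩
  · rw [← AlgHom.range_eq_top]
    exact range_top e he _ fun k => ⟨_, grep_basis e he k⟩
  · simp only [vol, map_mul, grep_basis]
    rw [gam_vol e he, sp_id, hle, Matrix.smul_one_eq_diagonal]
end

section
/- Let γ : Cl(4,3) → Mat₈(ℝ) be a surjective ℝ-algebra homomorphism with γ(ν) = l • 1 for a sign l ∈ {1, −1}. Then the kernel of γ equals the two-sided ideal of Cl(4,3) generated by the element 1 − l • ν; equivalently, γ factors through the simple summand Cl_l(4,3) = ½(1 + l ν) · Cl(4,3) of the splitting Cl(4,3) = Cl₊(4,3) ⊕ Cl₋(4,3). -/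
/-- Ordered monomials in `k` anticommuting generators span a space of dimension `≤ 2 ^ k`
that is stable under right multiplication by the generators. -/
theorem exists_stable_submodule {A : Type*} [Ring A] [Algebra ℝ A] (e : ℕ → A) (n : ℕ)
    (hsq : ∀ i < n, ∃ c : ℝ, e i * e i = algebraMap ℝ A c)
    (hanti : ∀ i < n, ∀ j < i, e i * e j = - (e j * e i)) :
    ∃ V : Submodule ℝ A, Module.Finite ℝ V ∧ Module.finrank ℝ V ≤ 2 ^ n ∧ 1 ∈ V ∧
      ∀ j < n, ∀ v ∈ V, v * e j ∈ V := by
  induction n with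
  | zero =>
    refine ⟨Submodule.span ℝ {1}, inferInstance, ?_, Submodule.mem_span_singleton_self _, ?_⟩
    · simpa using finrank_span_le_card (R := ℝ) ({1} : Set A)
    · intro j hj; omega
  | succ k ih =>
    obtain ⟨V, hfin, hdim, h1, hV⟩ := ih (fun i hi => hsq i (by omega))
      (fun i hi => hanti i (by omega))
    refine ⟨V ⊔ V.map (LinearMap.mulRight ℝ (e k)), inferInstance, ?_,
      Submodule.mem_sup_left h1, ?_⟩
    · have h2 := Submodule.finrank_add_le_finrank_add_finrank V
        (V.map (LinearMap.mulRight ℝ (e k)))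
      have h3 := Submodule.finrank_map_le (LinearMap.mulRight ℝ (e k)) V
      rw [pow_succ]; omega
    · intro j hj v hv
      obtain ⟨a, ha, b, hb, rfl⟩ := Submodule.mem_sup.1 hv
      obtain ⟨c, hc, rfl⟩ := hb
      rw [add_mul]
      rcases Nat.lt_succ_iff_lt_or_eq.1 hj with hjk | rfl
      · refine Submodule.add_mem _ (Submodule.mem_sup_left (hV j hjk a ha))
          (Submodule.mem_sup_right ⟨-(c * e j), V.neg_mem (hV j hjk c hc), ?_⟩)
        simp only [LinearMap.mulRight_apply]
        rw [mul_assoc, hanti k (by omega) j hjk]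
        simp [mul_assoc]
      · refine Submodule.add_mem _ (Submodule.mem_sup_right ⟨a, ha, rfl⟩)
          (Submodule.mem_sup_left ?_)
        obtain ⟨r, hr⟩ := hsq j (by omega)
        simp only [LinearMap.mulRight_apply]
        rw [mul_assoc, hr, ← Algebra.commutes, ← Algebra.smul_def]
        exact V.smul_mem r hc

theorem sig43_stdBasis (i : Fin 7) :
    sig43 (stdBasis i) = (![(1 : ℝ), 1, 1, 1, -1, -1, -1]) i := by
  simp [sig43, stdBasis, QuadraticMap.weightedSumSquares_apply, Pi.single_apply]

theorem sig43_polar_stdBasis (i j : Fin 7) (h : i ≠ j) :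
    QuadraticMap.polar sig43 (stdBasis i) (stdBasis j) = 0 := by
  simp only [QuadraticMap.polar, sig43, stdBasis, QuadraticMap.weightedSumSquares_apply,
    ← Finset.sum_sub_distrib]
  refine Finset.sum_eq_zero fun x _ => ?_
  by_cases h1 : x = i
  · subst h1; simp [Pi.single_apply, h]
  · simp [Pi.single_apply, h1]

/-- if γ : Cl(4,3) → Mat₈(ℝ) is a surjective ℝ-algebra homomorphism
with γ(ν) = l • 1 for a sign l, then ker γ is the two-sided ideal generated by
1 − l • ν, i.e. γ factors through the simple summand Cl_l(4,3). -/
theorem ker_eq_span_one_sub_vol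
    (γ : CliffordAlgebra sig43 →ₐ[ℝ] Matrix (Fin 8) (Fin 8) ℝ)
    (hγ : Function.Surjective γ) (l : ℝ) (hl : l = 1 ∨ l = -1)
    (hν : γ vol = l • (1 : Matrix (Fin 8) (Fin 8) ℝ)) :
    ∀ x : CliffordAlgebra sig43,
      γ x = 0 ↔ x ∈ TwoSidedIdeal.span {(1 : CliffordAlgebra sig43) - l • vol} := by
  set I := TwoSidedIdeal.span {(1 : CliffordAlgebra sig43) - l • vol} with hI
  have hgen : (1 : CliffordAlgebra sig43) - l • vol ∈ I :=
    TwoSidedIdeal.subset_span rfl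
  have hIker : ∀ x ∈ I, γ x = 0 := by
    have hle : I ≤ TwoSidedIdeal.ker γ := by
      rw [hI, TwoSidedIdeal.span_le]
      rintro _ rfl
      simp only [SetLike.mem_coe, TwoSidedIdeal.mem_ker]
      rw [map_sub, map_one, map_smul, hν, smul_smul]
      rcases hl with rfl | rfl <;> simp
    intro x hx
    exact (TwoSidedIdeal.mem_ker γ).1 (hle hx)
  let e : ℕ → CliffordAlgebra sig43 := fun i => CliffordAlgebra.ι sig43 (stdBasis (Fin.ofNat 7 i))
  obtain ⟨V, hfin, hdim, h1, hV⟩ := exists_stable_submodule e 6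
    (fun i _ => ⟨_, CliffordAlgebra.ι_sq_scalar _ _⟩) (by
      intro i hi j hj
      have hne : (Fin.ofNat 7 i) ≠ Fin.ofNat 7 j := by
        intro h
        have := congrArg Fin.val h
        simp only [Fin.ofNat] at this
        omega
      have := CliffordAlgebra.ι_mul_ι_add_swap (Q := sig43) (stdBasis (Fin.ofNat 7 i))
        (stdBasis (Fin.ofNat 7 j))
      rw [sig43_polar_stdBasis _ _ hne, map_zero] at this
      exact eq_neg_of_add_eq_zero_left this)
  -- reduction of the last generator
  have hlast : ∀ v ∈ V, ∃ w ∈ V, v * e 6 - w ∈ I := by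
    intro v hv
    have hp : v * e 0 * e 1 * e 2 * e 3 * e 4 * e 5 ∈ V :=
      hV 5 (by omega) _ <| hV 4 (by omega) _ <| hV 3 (by omega) _ <| hV 2 (by omega) _ <|
        hV 1 (by omega) _ <| hV 0 (by omega) _ hv
    refine ⟨(-l) • (v * e 0 * e 1 * e 2 * e 3 * e 4 * e 5), V.smul_mem _ hp, ?_⟩
    have h6 : e 6 * e 6 = -1 := by
      have := CliffordAlgebra.ι_sq_scalar sig43 (stdBasis 6)
      rw [sig43_stdBasis] at this
      have h' : (![(1 : ℝ), 1, 1, 1, -1, -1, -1]) 6 = -1 := rfl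
      rw [h', map_neg, map_one] at this
      exact this
    have hvol : vol = e 0 * e 1 * e 2 * e 3 * e 4 * e 5 * e 6 := rfl
    have := I.mul_mem_right _ (e 6) (I.mul_mem_left v _ hgen)
    convert this using 1
    rw [hvol]
    simp only [mul_sub, sub_mul, mul_one, mul_smul_comm, smul_mul_assoc, mul_assoc, h6]
    simp
  have hall : ∀ x, ∃ w ∈ V, x - w ∈ I := by
    have hstep : ∀ (i : Fin 7), ∀ v ∈ V,
        ∃ w ∈ V, v * CliffordAlgebra.ι sig43 (stdBasis i) - w ∈ I := by
      intro i v hv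
      have hi : CliffordAlgebra.ι sig43 (stdBasis i) = e i := by
        simp [e]
      rw [hi]
      by_cases h : (i : ℕ) < 6
      · exact ⟨_, hV i h v hv, by simpa using I.zero_mem⟩
      · have : (i : ℕ) = 6 := by omega
        rw [this]; exact hlast v hv
    intro x
    induction x using CliffordAlgebra.right_induction with
    | algebraMap r =>
      refine ⟨r • 1, V.smul_mem _ h1, ?_⟩
      rw [Algebra.algebraMap_eq_smul_one, sub_self]; exact I.zero_mem
    | add x y hx hy =>
      obtain ⟨a, ha, ha'⟩ := hx
      obtain ⟨b, hb, hb'⟩ := hy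
      refine ⟨a + b, V.add_mem ha hb, ?_⟩
      rw [add_sub_add_comm]; exact I.add_mem ha' hb'
    | mul_ι m x hx =>
      obtain ⟨a, ha, ha'⟩ := hx
      choose w hw hw' using fun i => hstep i a ha
      refine ⟨∑ i, m i • w i, V.sum_mem fun i _ => V.smul_mem _ (hw i), ?_⟩
      have hm : m = ∑ i, m i • stdBasis i := by
        ext j; simp [stdBasis, Pi.single_apply]
      have key : x * CliffordAlgebra.ι sig43 m - ∑ i, m i • w i =
          (x - a) * CliffordAlgebra.ι sig43 m +
          ∑ i, algebraMap ℝ (CliffordAlgebra sig43) (m i) *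
            (a * CliffordAlgebra.ι sig43 (stdBasis i) - w i) := by
        have : a * CliffordAlgebra.ι sig43 m =
            ∑ i, m i • (a * CliffordAlgebra.ι sig43 (stdBasis i)) := by
          conv_lhs => rw [hm]
          simp [Finset.mul_sum]
        simp only [← Algebra.smul_def, smul_sub, Finset.sum_sub_distrib, ← this]
        noncomm_ring
      rw [key]
      exact I.add_mem (I.mul_mem_right _ _ ha')
        (sum_mem fun i _ => I.mul_mem_left _ _ (hw' i))
  intro x
  refine ⟨fun hx => ?_, hIker x⟩
  let f : V →ₗ[ℝ] Matrix (Fin 8) (Fin 8) ℝ := γ.toLinearMap ∘ₗ V.subtype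
  have hred : ∀ y w, y - w ∈ I → γ y = γ w := fun y w h => by
    simpa [sub_eq_zero] using hIker _ h
  have hf : Function.Surjective f := by
    intro M
    obtain ⟨y, rfl⟩ := hγ M
    obtain ⟨w, hw, hyw⟩ := hall y
    exact ⟨⟨w, hw⟩, (hred y w hyw).symm⟩
  have hdimM : Module.finrank ℝ (Matrix (Fin 8) (Fin 8) ℝ) = 64 := by
    simp [Module.finrank_matrix]
  have hge := LinearMap.finrank_le_finrank_of_surjective (f := f) hf
  have heq : Module.finrank ℝ V = Module.finrank ℝ (Matrix (Fin 8) (Fin 8) ℝ) := by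
    norm_num at hdim; omega
  have hinj : Function.Injective f :=
    (LinearMap.injective_iff_surjective_of_finrank_eq_finrank heq).2 hf
  obtain ⟨w, hw, hxw⟩ := hall x
  have hw0 : f ⟨w, hw⟩ = 0 := (hred x w hxw).symm.trans hx
  have : (⟨w, hw⟩ : V) = 0 := hinj (by rw [hw0, map_zero])
  have hw' : w = 0 := congrArg Subtype.val this
  simpa [hw'] using hxw
end

section
/- Let u₁, u₂, u₃, w₁, w₂, w₃ ∈ ℝ⁷ satisfy: Q(uᵢ) = 0 and Q(wᵢ) = 0 for all i (all six vectors are isotropic), polar Q uᵢ uⱼ = 0 and polar Q wᵢ wⱼ = 0 for i ≠ j, polar Q uᵢ wⱼ = 0 for i ≠ j, and polar Q uᵢ wᵢ = 2 for each i (i.e. ⟨uᵢ, wᵢ⟩ = 1 for the associated symmetric bilinear form). Set c := ι(u₁) * ι(u₂) * ι(u₃) and d := ι(w₁) * ι(w₂) * ι(w₃) in Cl(4,3). Then c * d * c = −8 • c. (This is the key Clifford-algebra identity, corresponding to α ∨ β ∨ α = −8α, in the proof that a wedge of three isotropic mutually orthogonal one-forms is the square of an isotropic spinor.) -/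
/-- if u₁,u₂,u₃,w₁,w₂,w₃ ∈ ℝ⁷ are isotropic, mutually orthogonal
except for ⟨uᵢ,wᵢ⟩ = 1 (polar Q uᵢ wᵢ = 2), then with c = ι(u₁)ι(u₂)ι(u₃) and
d = ι(w₁)ι(w₂)ι(w₃) one has c * d * c = −8 • c in Cl(4,3). -/
theorem isotropic_triple_identity (u w : Fin 3 → (Fin 7 → ℝ))
    (hu : ∀ i, sig43 (u i) = 0) (hw : ∀ i, sig43 (w i) = 0)
    (huu : ∀ i j, i ≠ j → QuadraticMap.polar (⇑sig43) (u i) (u j) = 0)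
    (hww : ∀ i j, i ≠ j → QuadraticMap.polar (⇑sig43) (w i) (w j) = 0)
    (huw : ∀ i j, i ≠ j → QuadraticMap.polar (⇑sig43) (u i) (w j) = 0)
    (huw' : ∀ i, QuadraticMap.polar (⇑sig43) (u i) (w i) = 2) :
    (CliffordAlgebra.ι sig43 (u 0) * CliffordAlgebra.ι sig43 (u 1) *
        CliffordAlgebra.ι sig43 (u 2)) *
      (CliffordAlgebra.ι sig43 (w 0) * CliffordAlgebra.ι sig43 (w 1) *
        CliffordAlgebra.ι sig43 (w 2)) *
      (CliffordAlgebra.ι sig43 (u 0) * CliffordAlgebra.ι sig43 (u 1) *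
        CliffordAlgebra.ι sig43 (u 2)) =
    (-8 : ℝ) • (CliffordAlgebra.ι sig43 (u 0) * CliffordAlgebra.ι sig43 (u 1) *
        CliffordAlgebra.ι sig43 (u 2)) := by
  have anti : ∀ x y, QuadraticMap.polar (⇑sig43) x y = 0 →
      CliffordAlgebra.ι sig43 y * CliffordAlgebra.ι sig43 x =
        -(CliffordAlgebra.ι sig43 x * CliffordAlgebra.ι sig43 y) := by
    intro x y h
    have := CliffordAlgebra.ι_mul_ι_add_swap (Q := sig43) x y
    rw [h, map_zero] at this
    exact eq_neg_of_add_eq_zero_right this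
  have tri : ∀ i, CliffordAlgebra.ι sig43 (u i) * (CliffordAlgebra.ι sig43 (w i) *
      CliffordAlgebra.ι sig43 (u i)) = (2 : ℝ) • CliffordAlgebra.ι sig43 (u i) := by
    intro i
    have h1 := CliffordAlgebra.ι_mul_ι_add_swap (Q := sig43) (u i) (w i)
    rw [huw' i] at h1
    have h2 := CliffordAlgebra.ι_sq_scalar sig43 (u i)
    rw [hu i, map_zero] at h2
    rw [eq_sub_of_add_eq' h1, mul_sub, ← mul_assoc, h2, zero_mul, sub_zero,
      Algebra.smul_def, Algebra.commutes]
  have hwu : ∀ i j, i ≠ j → QuadraticMap.polar (⇑sig43) (w i) (u j) = 0 := by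
    intro i j h
    rw [QuadraticMap.polar_comm]
    exact huw j i h.symm
  have uu : ∀ i j, i < j → _ := fun i j (h : i < j) => anti _ _ (huu i j h.ne)
  have uw : ∀ i j, i < j → _ := fun i j (h : i < j) => anti _ _ (huw i j h.ne)
  have wu : ∀ i j, i < j → _ := fun i j (h : i < j) => anti _ _ (hwu i j h.ne)
  have ww : ∀ i j, i < j → _ := fun i j (h : i < j) => anti _ _ (hww i j h.ne)
  have l01 : (0 : Fin 3) < 1 := by decide
  have l02 : (0 : Fin 3) < 2 := by decide
  have l12 : (1 : Fin 3) < 2 := by decide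
  have t0 := tri 0
  have t1 := tri 1
  have t2 := tri 2
  have a1 := uu 0 1 l01
  have a2 := uu 0 2 l02
  have a3 := uu 1 2 l12
  have b1 := uw 0 1 l01
  have b2 := uw 0 2 l02
  have b3 := uw 1 2 l12
  have c1 := wu 0 1 l01
  have c2 := wu 0 2 l02
  have c3 := wu 1 2 l12
  clear uu uw wu ww tri anti
  generalize CliffordAlgebra.ι sig43 (u 0) = p at *
  generalize CliffordAlgebra.ι sig43 (u 1) = q at *
  generalize CliffordAlgebra.ι sig43 (u 2) = r at *
  generalize CliffordAlgebra.ι sig43 (w 0) = P at *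
  generalize CliffordAlgebra.ι sig43 (w 1) = S at *
  generalize CliffordAlgebra.ι sig43 (w 2) = R at *
  have assoc' : ∀ {x y z : CliffordAlgebra sig43}, x * y = -z →
      ∀ t, x * (y * t) = -(z * t) := by
    intro x y z h t
    rw [← mul_assoc, h, neg_mul]
  have T : ∀ {x y z : CliffordAlgebra sig43}, x * (y * x) = z →
      ∀ t, x * (y * (x * t)) = z * t := by
    intro x y z h t
    rw [← h]
    simp only [mul_assoc]
  simp only [mul_assoc, a1, a2, a3, b1, b2, b3, c1, c2, c3, assoc' a1, assoc' a2, assoc' a3,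
    assoc' b1, assoc' b2, assoc' b3, assoc' c1, assoc' c2, assoc' c3, t0, t1, t2,
    T t0, T t1, T t2, mul_neg, neg_mul, neg_neg, smul_mul_assoc, mul_smul_comm, smul_neg,
    smul_smul]
  rw [← neg_smul]
  norm_num
end

section
/- The set of matrices M ∈ Mat₇(ℝ) satisfying both Mᵀ * H + H * M = 0 and the infinitesimal invariance condition α(Mx, y, z) + α(x, My, z) + α(x, y, Mz) = 0 for all x, y, z ∈ ℝ⁷ equals exactly { T(A) + S(B) + N(v) : A ∈ Mat₃(ℝ) with trace A = 0, B ∈ Mat₃(ℝ) with Bᵀ = −B, v ∈ ℝ³ }. In particular this set is a 14-dimensional Lie subalgebra of Mat₇(ℝ), the Lie algebra of the stabilizer in Spin₀(4,3) of an isotropic irreducible spinor, isomorphic to 𝔰𝔩(3,ℝ) ⋉ (Λ²ℝ³ ⊕ ℝ³). -/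
open Matrix

/- The Gram matrix H = [[0, I₃, 0], [I₃, 0, 0], [0, 0, 1]] of the standard
signature-(4,3) symmetric bilinear form in an isotropic basis. -/
noncomputable def H : Matrix (Fin 7) (Fin 7) ℝ :=
  !![0,0,0,1,0,0,0;
     0,0,0,0,1,0,0;
     0,0,0,0,0,1,0;
     1,0,0,0,0,0,0;
     0,1,0,0,0,0,0;
     0,0,1,0,0,0,0;
     0,0,0,0,0,0,1]

/- 7×7 matrix in 3+3+1 block form: rows [[A, B, v], [C, D, u], [xᵀ, yᵀ, r]]. -/
noncomputable def blk (A B C D : Matrix (Fin 3) (Fin 3) ℝ) (v u x y : Fin 3 → ℝ)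
    (r : ℝ) : Matrix (Fin 7) (Fin 7) ℝ :=
  Matrix.of fun i j =>
    if hi : (i : ℕ) < 3 then
      if hj : (j : ℕ) < 3 then A ⟨i, hi⟩ ⟨j, hj⟩
      else if hj' : (j : ℕ) < 6 then B ⟨i, hi⟩ ⟨(j : ℕ) - 3, by omega⟩
      else v ⟨i, hi⟩
    else if hi' : (i : ℕ) < 6 then
      if hj : (j : ℕ) < 3 then C ⟨(i : ℕ) - 3, by omega⟩ ⟨j, hj⟩
      else if hj' : (j : ℕ) < 6 then D ⟨(i : ℕ) - 3, by omega⟩ ⟨(j : ℕ) - 3, by omega⟩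
      else u ⟨(i : ℕ) - 3, by omega⟩
    else
      if hj : (j : ℕ) < 3 then x ⟨j, hj⟩
      else if hj' : (j : ℕ) < 6 then y ⟨(j : ℕ) - 3, by omega⟩
      else r

/- T(A) = [[A, 0, 0], [0, −Aᵀ, 0], [0, 0, 0]]. -/
noncomputable def T (A : Matrix (Fin 3) (Fin 3) ℝ) : Matrix (Fin 7) (Fin 7) ℝ :=
  blk A 0 0 (-Aᵀ) 0 0 0 0 0

/- S(B) = [[0, B, 0], [0, 0, 0], [0, 0, 0]]. -/
noncomputable def S (B : Matrix (Fin 3) (Fin 3) ℝ) : Matrix (Fin 7) (Fin 7) ℝ :=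
  blk 0 B 0 0 0 0 0 0 0

/- N(v) = [[0, 0, v], [0, 0, 0], [0, −vᵀ, 0]]. -/
noncomputable def N (v : Fin 3 → ℝ) : Matrix (Fin 7) (Fin 7) ℝ :=
  blk 0 0 0 0 v 0 0 (-v) 0

/- The 3-form α = ϑ∧θ∧η, the square of an isotropic irreducible spinor:
α(x,y,z) = det [[x₃,y₃,z₃],[x₄,y₄,z₄],[x₅,y₅,z₅]]. -/
noncomputable def α (x y z : Fin 7 → ℝ) : ℝ :=
  Matrix.det !![x 3, y 3, z 3; x 4, y 4, z 4; x 5, y 5, z 5]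

/-- Entrywise form of the orthogonality condition. -/
lemma so_entry (M : Matrix (Fin 7) (Fin 7) ℝ) (h : Mᵀ * H + H * M = 0) :
    ∀ i j : Fin 7, M (![3,4,5,0,1,2,6] j) i + M (![3,4,5,0,1,2,6] i) j = 0 := by
  intro i j
  have e := congrFun (congrFun h i) j
  simp only [Matrix.add_apply, Matrix.mul_apply, Matrix.transpose_apply, Fin.sum_univ_seven,
    Matrix.zero_apply] at e
  rw [← e]
  congr 1
  · fin_cases j <;> simp [H]
  · fin_cases i <;> simp [H]

lemma so_of_entry (M : Matrix (Fin 7) (Fin 7) ℝ)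
    (h : ∀ i j : Fin 7, M (![3,4,5,0,1,2,6] j) i + M (![3,4,5,0,1,2,6] i) j = 0) :
    Mᵀ * H + H * M = 0 := by
  ext i j
  simp only [Matrix.add_apply, Matrix.mul_apply, Matrix.transpose_apply, Fin.sum_univ_seven,
    Matrix.zero_apply]
  rw [← h i j]
  congr 1
  · fin_cases j <;> simp [H]
  · fin_cases i <;> simp [H]

/-- A coordinate form of the invariance condition on basis vectors. -/
lemma inv_basis (M : Matrix (Fin 7) (Fin 7) ℝ)
    (h : ∀ x y z : Fin 7 → ℝ,
          α (M.mulVec x) y z + α x (M.mulVec y) z + α x y (M.mulVec z) = 0) (i j k : Fin 7) :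
    α (fun a => M a i) (Pi.single j 1) (Pi.single k 1)
      + α (Pi.single i 1) (fun a => M a j) (Pi.single k 1)
      + α (Pi.single i 1) (Pi.single j 1) (fun a => M a k) = 0 := by
  have := h (Pi.single i 1) (Pi.single j 1) (Pi.single k 1)
  simp only [Matrix.mulVec_single_one] at this
  exact this

lemma lower_zero (M : Matrix (Fin 7) (Fin 7) ℝ)
    (h : ∀ x y z : Fin 7 → ℝ,
          α (M.mulVec x) y z + α x (M.mulVec y) z + α x y (M.mulVec z) = 0)
    (c : Fin 7) (hc : c = 0 ∨ c = 1 ∨ c = 2 ∨ c = 6) :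
    M 3 c = 0 ∧ M 4 c = 0 ∧ M 5 c = 0 := by
  have h1 := inv_basis M h c 4 5
  have h2 := inv_basis M h c 3 5
  have h3 := inv_basis M h c 3 4
  rcases hc with rfl | rfl | rfl | rfl <;>
  · simp [α, Matrix.det_fin_three, Pi.single_apply] at h1 h2 h3
    exact ⟨h1, h2, h3⟩

lemma trace_zero (M : Matrix (Fin 7) (Fin 7) ℝ)
    (h : ∀ x y z : Fin 7 → ℝ,
          α (M.mulVec x) y z + α x (M.mulVec y) z + α x y (M.mulVec z) = 0) :
    M 3 3 + M 4 4 + M 5 5 = 0 := by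
  have h1 := inv_basis M h 3 4 5
  simpa [α, Matrix.det_fin_three, Pi.single_apply] using h1

set_option maxHeartbeats 4000000 in
theorem stabilizer_isotropic_spinor :
    {M : Matrix (Fin 7) (Fin 7) ℝ |
        Mᵀ * H + H * M = 0 ∧
        ∀ x y z : Fin 7 → ℝ,
          α (M.mulVec x) y z + α x (M.mulVec y) z + α x y (M.mulVec z) = 0} =
      {M : Matrix (Fin 7) (Fin 7) ℝ |
        ∃ (A B : Matrix (Fin 3) (Fin 3) ℝ) (v : Fin 3 → ℝ),
          A.trace = 0 ∧ Bᵀ = -B ∧ M = T A + S B + N v} := by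
  ext M
  simp only [Set.mem_ofPred_eq]
  constructor
  · rintro ⟨hH, hα⟩
    have e := so_entry M hH
    have z0 := lower_zero M hα 0 (by simp)
    have z1 := lower_zero M hα 1 (by simp)
    have z2 := lower_zero M hα 2 (by simp)
    have z6 := lower_zero M hα 6 (by simp)
    have t := trace_zero M hα
    have a0 := e 0 3
    have a1 := e 1 4
    have a2 := e 2 5
    refine ⟨!![M 0 0, M 0 1, M 0 2; M 1 0, M 1 1, M 1 2; M 2 0, M 2 1, M 2 2],
      !![M 0 3, M 0 4, M 0 5; M 1 3, M 1 4, M 1 5; M 2 3, M 2 4, M 2 5],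
      ![M 0 6, M 1 6, M 2 6], ?_, ?_, ?_⟩
    · simp at a0 a1 a2
      simp [Matrix.trace, Fin.sum_univ_three]
      linarith
    · ext i j
      have e33 := e 3 3
      have e34 := e 3 4
      have e35 := e 3 5
      have e44 := e 4 4
      have e45 := e 4 5
      have e55 := e 5 5
      simp at e33 e34 e35 e44 e45 e55
      fin_cases i <;> fin_cases j <;> simp <;> linarith
    · ext i j
      have h := e (![3,4,5,0,1,2,6] i) j
      obtain ⟨z01, z02, z03⟩ := z0
      obtain ⟨z11, z12, z13⟩ := z1
      obtain ⟨z21, z22, z23⟩ := z2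
      obtain ⟨z61, z62, z63⟩ := z6
      fin_cases i <;> fin_cases j <;> simp [T, S, N, blk] at h ⊢ <;> linarith
  · rintro ⟨A, B, v, hA, hB, rfl⟩
    have b : ∀ i j, B j i = - B i j := fun i j => congrFun (congrFun hB i) j
    constructor
    · apply so_of_entry
      have b00 := b 0 0
      have b01 := b 0 1
      have b02 := b 0 2
      have b11 := b 1 1
      have b12 := b 1 2
      have b22 := b 2 2
      intro i j
      fin_cases i <;> fin_cases j <;> simp [T, S, N, blk] <;> linarith
    · intro x y z
      have hA' : A 2 2 = - A 0 0 - A 1 1 := by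
        simp [Matrix.trace, Fin.sum_univ_three] at hA
        linarith
      simp [α, Matrix.det_fin_three, Matrix.mulVec, dotProduct, Fin.sum_univ_seven, T, S, N, blk]
      rw [hA']
      ring
end

section
/- For all A, A₁, A₂ ∈ Mat₃(ℝ), all skew-symmetric B ∈ Mat₃(ℝ), and all v ∈ ℝ³, the matrix commutators satisfy: ⁅T(A₁), T(A₂)⁆ = T(A₁A₂ − A₂A₁), ⁅T(A), S(B)⁆ = S(AB + BAᵀ) (and AB + BAᵀ is again skew-symmetric), and ⁅T(A), N(v)⁆ = N(A.mulVec v). These relations exhibit the semidirect-product structure 𝔰𝔩(3,ℝ) ⋉ (Λ²ℝ³ ⊕ ℝ³) of the stabilizer Lie algebra of an isotropic spinor. -/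
open Matrix
set_option linter.unusedSimpArgs false

/-- Indices of the first block. -/
def ixL (i : Fin 3) : Fin 7 := ⟨i, by omega⟩

/-- Indices of the second block. -/
def ixM (i : Fin 3) : Fin 7 := ⟨i + 3, by omega⟩

theorem ix_cases (i : Fin 7) : (∃ k, i = ixL k) ∨ (∃ k, i = ixM k) ∨ i = 6 := by
  by_cases h : (i : ℕ) < 3
  · exact Or.inl ⟨⟨i, h⟩, rfl⟩
  by_cases h' : (i : ℕ) < 6
  · refine Or.inr (Or.inl ⟨⟨(i : ℕ) - 3, by omega⟩, ?_⟩)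
    apply Fin.ext
    simp only [ixM]
    omega
  · refine Or.inr (Or.inr ?_)
    apply Fin.ext
    change (i : ℕ) = 6
    omega

theorem sum_ix (f : Fin 7 → ℝ) :
    ∑ k, f k = ∑ k, f (ixL k) + ∑ k, f (ixM k) + f 6 := by
  rw [Fin.sum_univ_seven, Fin.sum_univ_three, Fin.sum_univ_three]
  change _ = f 0 + f 1 + f 2 + (f 3 + f 4 + f 5) + f 6
  ring

section
variable (A B C D : Matrix (Fin 3) (Fin 3) ℝ) (v u x y : Fin 3 → ℝ) (r : ℝ) (i j : Fin 3)

theorem blk_LL : blk A B C D v u x y r (ixL i) (ixL j) = A i j := by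
  have h (k : Fin 3) : (k : ℕ) + 3 < 6 := by omega
  simp [blk, ixL, ixM, h]

theorem blk_LM : blk A B C D v u x y r (ixL i) (ixM j) = B i j := by
  have h (k : Fin 3) : (k : ℕ) + 3 < 6 := by omega
  simp [blk, ixL, ixM, h]

theorem blk_LZ : blk A B C D v u x y r (ixL i) 6 = v i := by
  have h (k : Fin 3) : (k : ℕ) + 3 < 6 := by omega
  simp [blk, ixL, ixM, h]

theorem blk_ML : blk A B C D v u x y r (ixM i) (ixL j) = C i j := by
  have h (k : Fin 3) : (k : ℕ) + 3 < 6 := by omega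
  simp [blk, ixL, ixM, h]

theorem blk_MM : blk A B C D v u x y r (ixM i) (ixM j) = D i j := by
  have h (k : Fin 3) : (k : ℕ) + 3 < 6 := by omega
  simp [blk, ixL, ixM, h]

theorem blk_MZ : blk A B C D v u x y r (ixM i) 6 = u i := by
  have h (k : Fin 3) : (k : ℕ) + 3 < 6 := by omega
  simp [blk, ixL, ixM, h]

theorem blk_ZL : blk A B C D v u x y r 6 (ixL j) = x j := by
  have h (k : Fin 3) : (k : ℕ) + 3 < 6 := by omega
  simp [blk, ixL, ixM, h]

theorem blk_ZM : blk A B C D v u x y r 6 (ixM j) = y j := by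
  have h (k : Fin 3) : (k : ℕ) + 3 < 6 := by omega
  simp [blk, ixL, ixM, h]

theorem blk_ZZ : blk A B C D v u x y r 6 6 = r := by
  have h (k : Fin 3) : (k : ℕ) + 3 < 6 := by omega
  simp [blk, ixL, ixM, h]

end

theorem lie_T_T (A₁ A₂ : Matrix (Fin 3) (Fin 3) ℝ) :
    ⁅T A₁, T A₂⁆ = T (A₁ * A₂ - A₂ * A₁) := by
  rw [Ring.lie_def]
  ext i j
  rw [Matrix.sub_apply, Matrix.mul_apply, Matrix.mul_apply, sum_ix, sum_ix]
  obtain ⟨i, rfl⟩ | ⟨i, rfl⟩ | rfl := ix_cases i <;>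
  obtain ⟨j, rfl⟩ | ⟨j, rfl⟩ | rfl := ix_cases j <;>
    simp [T, blk_LL, blk_LM, blk_LZ, blk_ML, blk_MM, blk_MZ, blk_ZL, blk_ZM, blk_ZZ,
      Matrix.mul_apply, Matrix.mulVec, dotProduct, mul_comm]

theorem lie_T_S (A B : Matrix (Fin 3) (Fin 3) ℝ) :
    ⁅T A, S B⁆ = S (A * B + B * Aᵀ) := by
  rw [Ring.lie_def]
  ext i j
  rw [Matrix.sub_apply, Matrix.mul_apply, Matrix.mul_apply, sum_ix, sum_ix]
  obtain ⟨i, rfl⟩ | ⟨i, rfl⟩ | rfl := ix_cases i <;>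
  obtain ⟨j, rfl⟩ | ⟨j, rfl⟩ | rfl := ix_cases j <;>
    simp [T, S, blk_LL, blk_LM, blk_LZ, blk_ML, blk_MM, blk_MZ, blk_ZL, blk_ZM, blk_ZZ,
      Matrix.mul_apply, Matrix.mulVec, dotProduct, mul_comm]

theorem lie_T_N (A : Matrix (Fin 3) (Fin 3) ℝ) (v : Fin 3 → ℝ) :
    ⁅T A, N v⁆ = N (A.mulVec v) := by
  rw [Ring.lie_def]
  ext i j
  rw [Matrix.sub_apply, Matrix.mul_apply, Matrix.mul_apply, sum_ix, sum_ix]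
  obtain ⟨i, rfl⟩ | ⟨i, rfl⟩ | rfl := ix_cases i <;>
  obtain ⟨j, rfl⟩ | ⟨j, rfl⟩ | rfl := ix_cases j <;>
    simp [T, N, blk_LL, blk_LM, blk_LZ, blk_ML, blk_MM, blk_MZ, blk_ZL, blk_ZM, blk_ZZ,
      Matrix.mul_apply, Matrix.mulVec, dotProduct, mul_comm]

/-- commutator relations exhibiting the semidirect-product
structure 𝔰𝔩(3,ℝ) ⋉ (Λ²ℝ³ ⊕ ℝ³): ⁅T(A₁),T(A₂)⁆ = T(⁅A₁,A₂⁆),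
⁅T(A),S(B)⁆ = S(AB + BAᵀ) with AB + BAᵀ again skew, and ⁅T(A),N(v)⁆ = N(Av). -/
theorem semidirect_relations (A A₁ A₂ B : Matrix (Fin 3) (Fin 3) ℝ)
    (hB : Bᵀ = -B) (v : Fin 3 → ℝ) :
    ⁅T A₁, T A₂⁆ = T (A₁ * A₂ - A₂ * A₁) ∧
    ⁅T A, S B⁆ = S (A * B + B * Aᵀ) ∧
    (A * B + B * Aᵀ)ᵀ = -(A * B + B * Aᵀ) ∧
    ⁅T A, N v⁆ = N (A.mulVec v) := by
  refine ⟨lie_T_T A₁ A₂, lie_T_S A B, ?_, lie_T_N A v⟩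
  rw [Matrix.transpose_add, Matrix.transpose_mul, Matrix.transpose_mul, hB,
    Matrix.transpose_transpose]
  simp only [Matrix.neg_mul, Matrix.mul_neg]
  abel
end

section
/- Let 𝔫 := { S(B) + N(v) : B ∈ Mat₃(ℝ) with Bᵀ = −B, v ∈ ℝ³ } ⊆ Mat₇(ℝ). Then 𝔫 is a Lie subalgebra under the matrix commutator, its derived subalgebra ⁅𝔫, 𝔫⁆ equals { S(B) : Bᵀ = −B } and has dimension 3, and ⁅⁅𝔫, 𝔫⁆, 𝔫⁆ = 0; hence 𝔫 is a 6-dimensional two-step nilpotent Lie algebra with three-dimensional derived subalgebra (the algebra Λ²ℝ³ ⊕ ℝ³). -/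
open Matrix

/- 𝔫 = { S(B) + N(v) : Bᵀ = −B, v ∈ ℝ³ }. -/
noncomputable def nilp : Set (Matrix (Fin 7) (Fin 7) ℝ) :=
  {M | ∃ (B : Matrix (Fin 3) (Fin 3) ℝ) (v : Fin 3 → ℝ), Bᵀ = -B ∧ M = S B + N v}

/- The set { S(B) : Bᵀ = −B }. -/
noncomputable def derivedNilp : Set (Matrix (Fin 7) (Fin 7) ℝ) :=
  {M | ∃ B : Matrix (Fin 3) (Fin 3) ℝ, Bᵀ = -B ∧ M = S B}

/-- Coordinates on the algebra. -/
noncomputable def cmat (p : Fin 6 → ℝ) : Matrix (Fin 7) (Fin 7) ℝ :=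
  !![0,0,0,0,p 0,p 1,p 3;
     0,0,0,-p 0,0,p 2,p 4;
     0,0,0,-p 1,-p 2,0,p 5;
     0,0,0,0,0,0,0;
     0,0,0,0,0,0,0;
     0,0,0,0,0,0,0;
     0,0,0,-p 3,-p 4,-p 5,0]

noncomputable def cskew (a b c : ℝ) : Matrix (Fin 3) (Fin 3) ℝ :=
  !![0,a,b;-a,0,c;-b,-c,0]

lemma cskew_skew (a b c : ℝ) : (cskew a b c)ᵀ = -cskew a b c := by
  ext i j; fin_cases i <;> fin_cases j <;> simp [cskew]

lemma skew_eq (B : Matrix (Fin 3) (Fin 3) ℝ) (h : Bᵀ = -B) :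
    B = cskew (B 0 1) (B 0 2) (B 1 2) := by
  have e : ∀ i j, B j i = - B i j := fun i j => congrFun (congrFun h i) j
  ext i j
  fin_cases i <;> fin_cases j <;> simp [cskew] <;>
    first | exact e _ _ | (linarith [e 0 0, e 1 1, e 2 2])

lemma cmat_eq (a b c x y z : ℝ) :
    S (cskew a b c) + N ![x,y,z] = cmat ![a,b,c,x,y,z] := by
  ext i j
  fin_cases i <;> fin_cases j <;> simp [cskew, S, N, blk, cmat]

lemma S_eq (a b c : ℝ) : S (cskew a b c) = cmat ![a,b,c,0,0,0] := by
  ext i j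
  fin_cases i <;> fin_cases j <;> simp [cskew, S, blk, cmat]

lemma mem_nilp (M : Matrix (Fin 7) (Fin 7) ℝ) :
    M ∈ nilp ↔ ∃ a b c x y z, M = cmat ![a,b,c,x,y,z] := by
  constructor
  · rintro ⟨B, v, hB, rfl⟩
    refine ⟨B 0 1, B 0 2, B 1 2, v 0, v 1, v 2, ?_⟩
    rw [← cmat_eq, ← skew_eq B hB]
    congr 2
    ext i; fin_cases i <;> rfl
  · rintro ⟨a, b, c, x, y, z, rfl⟩
    exact ⟨_, _, cskew_skew a b c, (cmat_eq ..).symm⟩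

lemma mem_derived (M : Matrix (Fin 7) (Fin 7) ℝ) :
    M ∈ derivedNilp ↔ ∃ a b c, M = cmat ![a,b,c,0,0,0] := by
  constructor
  · rintro ⟨B, hB, rfl⟩
    exact ⟨B 0 1, B 0 2, B 1 2, by rw [← S_eq, ← skew_eq B hB]⟩
  · rintro ⟨a, b, c, rfl⟩
    exact ⟨_, cskew_skew a b c, (S_eq ..).symm⟩

lemma cmat_bracket (a b c x y z a₂ b₂ c₂ x₂ y₂ z₂ : ℝ) :
    ⁅cmat ![a,b,c,x,y,z], cmat ![a₂,b₂,c₂,x₂,y₂,z₂]⁆ =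
      cmat ![x₂ * y - x * y₂, x₂ * z - x * z₂, y₂ * z - y * z₂, 0, 0, 0] := by
  rw [Ring.lie_def]
  ext i j
  rw [Matrix.sub_apply, Matrix.mul_apply, Matrix.mul_apply]
  fin_cases i <;> fin_cases j <;> simp [cmat, Fin.sum_univ_succ] <;> ring

noncomputable def cmatL : (Fin 6 → ℝ) →ₗ[ℝ] Matrix (Fin 7) (Fin 7) ℝ where
  toFun := cmat
  map_add' p q := by
    ext i j; fin_cases i <;> fin_cases j <;> simp [cmat] <;> ring
  map_smul' r p := by
    ext i j; fin_cases i <;> fin_cases j <;> simp [cmat]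

lemma cmatL_inj : Function.Injective cmatL := by
  intro p q h
  have e : ∀ i j, cmat p i j = cmat q i j := fun i j => congrFun (congrFun h i) j
  ext i
  fin_cases i
  · exact e 0 4
  · exact e 0 5
  · exact e 1 5
  · exact e 0 6
  · exact e 1 6
  · exact e 2 6

noncomputable def padL : (Fin 3 → ℝ) →ₗ[ℝ] (Fin 6 → ℝ) where
  toFun p := ![p 0, p 1, p 2, 0, 0, 0]
  map_add' p q := by ext i; fin_cases i <;> simp
  map_smul' r p := by ext i; fin_cases i <;> simp

lemma padL_inj : Function.Injective padL := by
  intro p q h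
  ext i
  fin_cases i
  · exact congrFun h 0
  · exact congrFun h 1
  · exact congrFun h 2

lemma nilp_range : nilp = (LinearMap.range cmatL : Set _) := by
  ext M
  rw [mem_nilp]
  constructor
  · rintro ⟨a, b, c, x, y, z, rfl⟩
    exact ⟨_, rfl⟩
  · rintro ⟨p, rfl⟩
    refine ⟨p 0, p 1, p 2, p 3, p 4, p 5, ?_⟩
    change cmat p = _
    congr 1
    ext i; fin_cases i <;> rfl

lemma derived_range : derivedNilp = (LinearMap.range (cmatL ∘ₗ padL) : Set _) := by
  ext M
  rw [mem_derived]
  constructor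
  · rintro ⟨a, b, c, rfl⟩
    exact ⟨![a,b,c], rfl⟩
  · rintro ⟨p, rfl⟩
    exact ⟨p 0, p 1, p 2, rfl⟩

/-- 𝔫 is closed under the commutator bracket, its derived
subalgebra is { S(B) : Bᵀ = −B } and is 3-dimensional, brackets of derived
elements with 𝔫 vanish (two-step nilpotency), and 𝔫 is 6-dimensional. -/
theorem nilp_two_step_nilpotent :
    (∀ M₁ ∈ nilp, ∀ M₂ ∈ nilp, ⁅M₁, M₂⁆ ∈ nilp) ∧
    Submodule.span ℝ {m | ∃ M₁ ∈ nilp, ∃ M₂ ∈ nilp, m = ⁅M₁, M₂⁆} =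
      Submodule.span ℝ derivedNilp ∧
    (∀ M₁ ∈ derivedNilp, ∀ M₂ ∈ nilp, ⁅M₁, M₂⁆ = 0) ∧
    Module.finrank ℝ (Submodule.span ℝ nilp) = 6 ∧
    Module.finrank ℝ (Submodule.span ℝ derivedNilp) = 3 := by
  refine ⟨?_, ?_, ?_, ?_, ?_⟩
  · intro M₁ h₁ M₂ h₂
    obtain ⟨a, b, c, x, y, z, rfl⟩ := (mem_nilp _).1 h₁
    obtain ⟨a₂, b₂, c₂, x₂, y₂, z₂, rfl⟩ := (mem_nilp _).1 h₂
    rw [cmat_bracket]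
    exact (mem_nilp _).2 ⟨_, _, _, _, _, _, rfl⟩
  · apply le_antisymm
    · apply Submodule.span_mono
      rintro m ⟨M₁, h₁, M₂, h₂, rfl⟩
      obtain ⟨a, b, c, x, y, z, rfl⟩ := (mem_nilp _).1 h₁
      obtain ⟨a₂, b₂, c₂, x₂, y₂, z₂, rfl⟩ := (mem_nilp _).1 h₂
      rw [cmat_bracket]
      exact (mem_derived _).2 ⟨_, _, _, rfl⟩
    · rw [Submodule.span_le]
      intro M hM
      obtain ⟨a, b, c, rfl⟩ := (mem_derived _).1 hM
      have key : cmat ![a,b,c,0,0,0] =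
          ⁅cmat ![0,0,0,0,a,b], cmat ![0,0,0,1,0,0]⁆ +
          ⁅cmat ![0,0,0,0,0,c], cmat ![0,0,0,0,1,0]⁆ := by
        rw [cmat_bracket, cmat_bracket]
        change _ = cmatL _ + cmatL _
        rw [← map_add]
        change _ = cmat _
        congr 1
        ext i; fin_cases i <;> simp
      rw [key]
      exact Submodule.add_mem _
        (Submodule.subset_span ⟨_, (mem_nilp _).2 ⟨_, _, _, _, _, _, rfl⟩,
          _, (mem_nilp _).2 ⟨_, _, _, _, _, _, rfl⟩, rfl⟩)
        (Submodule.subset_span ⟨_, (mem_nilp _).2 ⟨_, _, _, _, _, _, rfl⟩,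
          _, (mem_nilp _).2 ⟨_, _, _, _, _, _, rfl⟩, rfl⟩)
  · intro M₁ h₁ M₂ h₂
    obtain ⟨a, b, c, rfl⟩ := (mem_derived _).1 h₁
    obtain ⟨a₂, b₂, c₂, x₂, y₂, z₂, rfl⟩ := (mem_nilp _).1 h₂
    rw [cmat_bracket]
    ext i j
    fin_cases i <;> fin_cases j <;> simp [cmat]
  · rw [nilp_range, Submodule.span_eq, LinearMap.finrank_range_of_inj cmatL_inj]
    simp
  · rw [derived_range, Submodule.span_eq,
      LinearMap.finrank_range_of_inj (f := cmatL ∘ₗ padL) (cmatL_inj.comp padL_inj)]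
    simp
end
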